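/- For every complex number q with |q| < 1, ∑_{k∈ℤ} q^{30k²}(q^{3k} − q^{27k+6}) = φ(q³)·b(q³). (Equation (2.20): the shifted Virasoro character φ(q)q^{−1/30}χ^{2,3}_{5,6}(q) equals φ(q³)b(q³).) -/

import Mathlib

open scoped BigOperators

/-- The Euler function `φ(q) = ∏_{n=1}^∞ (1 - q^n)`. -/
noncomputable def eulerPhi (q : ℂ) : ℂ := ∏' n : ℕ, (1 - q ^ (n + 1))

/-- The first Rogers–Ramanujan series
`a(q) = ∏_{n=1}^∞ 1/((1 - q^{5n-2})(1 - q^{5n-3}))`. -/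
noncomputable def rrA (q : ℂ) : ℂ :=
  ∏' n : ℕ, ((1 - q ^ (5 * n + 3)) * (1 - q ^ (5 * n + 2)))⁻¹

/-- The second Rogers–Ramanujan series
`b(q) = ∏_{n=1}^∞ 1/((1 - q^{5n-1})(1 - q^{5n-4}))`. -/
noncomputable def rrB (q : ℂ) : ℂ :=
  ∏' n : ℕ, ((1 - q ^ (5 * n + 4)) * (1 - q ^ (5 * n + 1)))⁻¹

/-- `G(q) = ∏_{n=1}^∞ (1-q^{15n})(1-q^{15n-7})(1-q^{15n-8})
          - q ∏_{n=1}^∞ (1-q^{15n})(1-q^{15n-13})(1-q^{15n-2})`. -/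
noncomputable def Gf (q : ℂ) : ℂ :=
  (∏' n : ℕ, (1 - q ^ (15 * n + 15)) * (1 - q ^ (15 * n + 8)) * (1 - q ^ (15 * n + 7)))
  - q * ∏' n : ℕ, (1 - q ^ (15 * n + 15)) * (1 - q ^ (15 * n + 2)) * (1 - q ^ (15 * n + 13))

/-- `H(q) = ∏_{n=1}^∞ (1-q^{15n})(1-q^{15n-4})(1-q^{15n-11})
          + q ∏_{n=1}^∞ (1-q^{15n})(1-q^{15n-14})(1-q^{15n-1})`. -/
noncomputable def Hf (q : ℂ) : ℂ :=
  (∏' n : ℕ, (1 - q ^ (15 * n + 15)) * (1 - q ^ (15 * n + 11)) * (1 - q ^ (15 * n + 4)))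
  + q * ∏' n : ℕ, (1 - q ^ (15 * n + 15)) * (1 - q ^ (15 * n + 1)) * (1 - q ^ (15 * n + 14))

/-!
The Jacobi triple product
`(q; q)_∞ (z; q)_∞ (q/z; q)_∞ = ∑_{m ∈ ℤ} (-z)^m q^{m(m-1)/2}`
is the limit of its finite form, which is Cauchy's `q`-binomial theorem for `(z q^{-N}; q)_{2N}`
with the summation index centred at `N`. At base `x^5` and argument `x^3`, where `x = q^3`, the
product side is what the factors of `b(x)` leave of `φ(x)` after splitting it by residues modulo
`5`, and on the series side the even indices `2k` and the odd indices `-(2k+1)` contribute the two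
terms of the character.
-/

open Filter Topology

section Finite

variable {R 𝕜 : Type*} [CommRing R] [Field 𝕜]

/-- The finite `q`-Pochhammer symbol `(a; q)_n`. -/
def qPochhammer (a q : R) (n : ℕ) : R := ∏ i ∈ Finset.range n, (1 - a * q ^ i)

@[simp]
lemma qPochhammer_zero (a q : R) : qPochhammer a q 0 = 1 := by
  simp [qPochhammer]

lemma qPochhammer_succ (a q : R) (n : ℕ) :
    qPochhammer a q (n + 1) = qPochhammer a q n * (1 - a * q ^ n) :=
  Finset.prod_range_succ _ _

lemma qPochhammer_add (a q : R) (m n : ℕ) :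
    qPochhammer a q (m + n) = qPochhammer a q m * qPochhammer (a * q ^ m) q n := by
  simp only [qPochhammer, Finset.prod_range_add, pow_add, mul_assoc]

lemma qPochhammer_self_ne_zero [IsDomain R] {q : R} (hq : ¬ IsOfFinOrder q) (n : ℕ) :
    qPochhammer q q n ≠ 0 := by
  refine Finset.prod_ne_zero_iff.mpr fun i _ h => hq ?_
  rw [← pow_succ', sub_eq_zero] at h
  exact isOfFinOrder_iff_pow_eq_one.mpr ⟨i + 1, i.succ_pos, h.symm⟩

/-- The general term `(-z)^m q^{m(m-1)/2}` of the theta series in Jacobi's triple product. -/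
def thetaTerm (q z : 𝕜) (m : ℤ) : 𝕜 := (-z) ^ m * q ^ (m * (m - 1) / 2)

@[simp]
lemma thetaTerm_zero (q z : 𝕜) : thetaTerm q z 0 = 1 := by
  simp [thetaTerm]

lemma thetaTerm_ne_zero {q z : 𝕜} (hq : q ≠ 0) (hz : z ≠ 0) (m : ℤ) : thetaTerm q z m ≠ 0 :=
  mul_ne_zero (zpow_ne_zero _ (neg_ne_zero.mpr hz)) (zpow_ne_zero _ hq)

lemma two_mul_mul_pred_ediv_two (m : ℤ) : 2 * (m * (m - 1) / 2) = m * (m - 1) :=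
  Int.two_mul_ediv_two_of_even (Int.even_mul_pred_self m)

lemma thetaTerm_add {q z : 𝕜} (hq : q ≠ 0) (hz : z ≠ 0) (m n : ℤ) :
    thetaTerm q z (m + n) = thetaTerm q z m * thetaTerm q (z * q ^ m) n := by
  have hexp : (m + n) * (m + n - 1) / 2 = m * (m - 1) / 2 + (m * n + n * (n - 1) / 2) := by
    linarith [two_mul_mul_pred_ediv_two m, two_mul_mul_pred_ediv_two n,
      two_mul_mul_pred_ediv_two (m + n)]
  rw [thetaTerm, thetaTerm, thetaTerm, hexp, zpow_add₀ (neg_ne_zero.mpr hz), zpow_add₀ hq,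
    zpow_add₀ hq, ← neg_mul, mul_zpow, zpow_mul]
  ring

lemma thetaTerm_add_one {q z : 𝕜} (hq : q ≠ 0) (hz : z ≠ 0) (m : ℤ) :
    thetaTerm q z (m + 1) = thetaTerm q z m * (-(z * q ^ m)) := by
  rw [thetaTerm_add hq hz]
  simp [thetaTerm]

lemma thetaTerm_neg {q z : 𝕜} (hq : q ≠ 0) (m : ℤ) :
    thetaTerm q z (-m) = thetaTerm q (q / z) m := by
  have hexp : -m * (-m - 1) / 2 = m + m * (m - 1) / 2 := by
    linarith [two_mul_mul_pred_ediv_two m, two_mul_mul_pred_ediv_two (-m)]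
  rw [thetaTerm, thetaTerm, hexp, zpow_add₀ hq, zpow_neg, ← inv_zpow, ← mul_assoc, ← mul_zpow,
    ← div_neg, div_eq_inv_mul]

lemma thetaTerm_natCast {q z : 𝕜} (hq : q ≠ 0) (hz : z ≠ 0) (n : ℕ) :
    thetaTerm q z n = ∏ i ∈ Finset.range n, (-(z * q ^ i)) := by
  induction n with
  | zero => simp
  | succ n ih =>
    rw [Nat.cast_succ, thetaTerm_add_one hq hz, ih, Finset.prod_range_succ, zpow_natCast]

lemma qPochhammer_eq_thetaTerm_mul {q a : 𝕜} (hq : q ≠ 0) (ha : a ≠ 0) (n : ℕ) :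
    qPochhammer a q n = thetaTerm q a n * qPochhammer (q / (a * q ^ n)) q n := by
  rw [thetaTerm_natCast hq ha, qPochhammer, qPochhammer,
    ← Finset.prod_range_reflect (fun i => 1 - q / (a * q ^ n) * q ^ i), ← Finset.prod_mul_distrib]
  refine Finset.prod_congr rfl fun i hi => ?_
  obtain ⟨j, rfl⟩ := Nat.exists_eq_add_of_lt (Finset.mem_range.mp hi)
  rw [show i + j + 1 - 1 - i = j by omega]
  field_simp
  ring

/-- The reciprocal `1 / (q; q)_n`, extended by zero to negative `n`. -/
def recipQPochhammer (q : 𝕜) (n : ℤ) : 𝕜 := if n < 0 then 0 else (qPochhammer q q n.toNat)⁻¹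

@[simp]
lemma recipQPochhammer_natCast (q : 𝕜) (n : ℕ) : recipQPochhammer q n = (qPochhammer q q n)⁻¹ := by
  simp [recipQPochhammer]

lemma recipQPochhammer_of_neg (q : 𝕜) {n : ℤ} (hn : n < 0) : recipQPochhammer q n = 0 :=
  if_pos hn

lemma recipQPochhammer_sub_one {q : 𝕜} (hq : ¬ IsOfFinOrder q) (n : ℤ) :
    recipQPochhammer q (n - 1) = (1 - q ^ n) * recipQPochhammer q n := by
  rcases lt_trichotomy n 0 with hn | rfl | hn
  · rw [recipQPochhammer_of_neg q hn, recipQPochhammer_of_neg q (by omega), mul_zero]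
  · simp [recipQPochhammer_of_neg]
  · obtain ⟨k, rfl⟩ : ∃ k : ℕ, n = (k + 1 : ℕ) := ⟨(n - 1).toNat, by omega⟩
    have hne := qPochhammer_self_ne_zero hq (k + 1)
    rw [qPochhammer_succ, ← pow_succ'] at hne
    rw [Nat.cast_succ, add_sub_cancel_right, ← Nat.cast_succ, zpow_natCast,
      recipQPochhammer_natCast, recipQPochhammer_natCast, qPochhammer_succ, ← pow_succ',
      mul_inv_rev, mul_inv_cancel_left₀ (right_ne_zero_of_mul hne)]

/-- The Gaussian binomial coefficient `(q; q)_n / ((q; q)_k (q; q)_{n-k})`, for all integers `k`;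
it vanishes unless `0 ≤ k ≤ n`. When `q` is a root of unity the denominators may vanish and the
value is not the Gaussian polynomial. -/
def qBinom (q : 𝕜) (n : ℕ) (k : ℤ) : 𝕜 :=
  qPochhammer q q n * recipQPochhammer q k * recipQPochhammer q (n - k)

lemma qBinom_zero_left (q : 𝕜) (k : ℤ) : qBinom q 0 k = if k = 0 then 1 else 0 := by
  rcases lt_trichotomy k 0 with hk | rfl | hk
  · simp [qBinom, recipQPochhammer_of_neg q hk, hk.ne]
  · simp [qBinom, recipQPochhammer]
  · simp [qBinom, recipQPochhammer_of_neg q (neg_neg_of_pos hk), hk.ne']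

lemma qBinom_succ {q : 𝕜} (hq₀ : q ≠ 0) (hq : ¬ IsOfFinOrder q) (n : ℕ) (k : ℤ) :
    qBinom q (n + 1) k = qBinom q n k + q ^ (n + 1 - k) * qBinom q n (k - 1) := by
  have hleft := recipQPochhammer_sub_one hq k
  have hright := recipQPochhammer_sub_one hq (n + 1 - k)
  have hpow : q ^ (n + 1 - k) * q ^ k = q * q ^ n := by
    rw [← zpow_add₀ hq₀, sub_add_cancel, zpow_add_one₀ hq₀, zpow_natCast, mul_comm]
  simp only [qBinom, qPochhammer_succ, Nat.cast_succ]
  rw [show (n : ℤ) - k = n + 1 - k - 1 by ring, show (n : ℤ) - (k - 1) = n + 1 - k by ring,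
    hleft, hright]
  linear_combination
    (qPochhammer q q n * recipQPochhammer q k * recipQPochhammer q (n + 1 - k)) * hpow

variable [TopologicalSpace 𝕜] [IsTopologicalRing 𝕜]

/-- **Cauchy's `q`-binomial theorem**. -/
theorem hasSum_qBinom_mul_thetaTerm {q z : 𝕜} (hq₀ : q ≠ 0) (hq : ¬ IsOfFinOrder q) (hz : z ≠ 0)
    (n : ℕ) : HasSum (fun k => qBinom q n k * thetaTerm q z k) (qPochhammer z q n) := by
  induction n with
  | zero =>
    have hterm (k : ℤ) : qBinom q 0 k * thetaTerm q z k = if k = 0 then 1 else 0 := by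
      rw [qBinom_zero_left]
      split_ifs with hk <;> simp [hk]
    simpa only [hterm, qPochhammer_zero] using hasSum_ite_eq (0 : ℤ) (1 : 𝕜)
  | succ n ih =>
    have hshift := ((Equiv.subRight (1 : ℤ)).hasSum_iff.mpr ih).mul_right (-(z * q ^ n))
    rw [qPochhammer_succ, mul_sub, mul_one, sub_eq_add_neg, ← mul_neg]
    refine (ih.add hshift).congr_fun fun k => ?_
    have htheta := thetaTerm_add_one hq₀ hz (k - 1)
    have hpow : q ^ (n + 1 - k) * q ^ (k - 1) = q ^ n := by
      rw [← zpow_add₀ hq₀, ← zpow_natCast]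
      congr 1
      ring
    rw [sub_add_cancel] at htheta
    rw [qBinom_succ hq₀ hq, Function.comp_apply, Equiv.subRight_apply, htheta, ← hpow]
    ring

theorem hasSum_qBinom_centered_mul_thetaTerm {q z : 𝕜} (hq₀ : q ≠ 0) (hq : ¬ IsOfFinOrder q)
    (hz : z ≠ 0) (N : ℕ) :
    HasSum (fun m : ℤ => qBinom q (2 * N) (N + m) * thetaTerm q z m)
      (qPochhammer z q N * qPochhammer (q / z) q N) := by
  have hqN : q ^ N ≠ 0 := pow_ne_zero N hq₀
  set w := z / q ^ N
  have hwz : w * q ^ N = z := div_mul_cancel₀ z hqN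
  have hw₀ : w ≠ 0 := div_ne_zero hz hqN
  have hθ := thetaTerm_ne_zero hq₀ hw₀ N
  have hprod : qPochhammer w q (2 * N) * (thetaTerm q w N)⁻¹ =
      qPochhammer z q N * qPochhammer (q / z) q N := by
    rw [two_mul, qPochhammer_add, qPochhammer_eq_thetaTerm_mul hq₀ hw₀, hwz]
    field_simp
  rw [← hprod]
  refine (((Equiv.addLeft (N : ℤ)).hasSum_iff.mpr
    (hasSum_qBinom_mul_thetaTerm hq₀ hq hw₀ (2 * N))).mul_right _).congr_fun fun m => ?_
  rw [Function.comp_apply, Equiv.coe_addLeft, thetaTerm_add hq₀ hw₀, zpow_natCast, hwz]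
  field_simp

end Finite

section Infinite

variable {R 𝕜 : Type*} [CommRing R] [TopologicalSpace R] [NormedField 𝕜]

/-- The infinite `q`-Pochhammer symbol `(a; q)_∞`, meaningful when the product converges, for
instance for `‖q‖ < 1` in a complete normed field. -/
noncomputable def qPochhammerInf (a q : R) : R := ∏' n : ℕ, (1 - a * q ^ n)

lemma norm_pow_lt_one {q : 𝕜} (hq : ‖q‖ < 1) {n : ℕ} (hn : n ≠ 0) : ‖q ^ n‖ < 1 := by
  rw [norm_pow]
  exact pow_lt_one₀ (norm_nonneg q) hq hn

lemma not_isOfFinOrder_of_norm_lt_one {q : 𝕜} (hq : ‖q‖ < 1) : ¬ IsOfFinOrder q :=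
  fun h => hq.ne h.norm_eq_one

lemma summable_norm_neg_mul_pow (a : 𝕜) {q : 𝕜} (hq : ‖q‖ < 1) :
    Summable fun n : ℕ => ‖-(a * q ^ n)‖ := by
  simpa only [norm_neg, norm_mul, norm_pow] using
    (summable_geometric_of_lt_one (norm_nonneg q) hq).mul_left ‖a‖

lemma summable_norm_thetaTerm_natCast {q z : 𝕜} (hq₀ : q ≠ 0) (hq : ‖q‖ < 1) (hz : z ≠ 0) :
    Summable fun n : ℕ => ‖thetaTerm q z n‖ := by
  have hratio : Tendsto (fun n : ℕ => ‖z * q ^ n‖) atTop (𝓝 0) := by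
    simpa using ((tendsto_pow_atTop_nhds_zero_of_norm_lt_one hq).const_mul z).norm
  refine summable_of_ratio_norm_eventually_le one_half_lt_one ?_
  filter_upwards [hratio.eventually_le_const one_half_pos] with n hn
  rw [norm_norm, norm_norm, Nat.cast_succ, thetaTerm_add_one hq₀ hz, norm_mul, norm_neg,
    zpow_natCast, mul_comm]
  gcongr

lemma summable_norm_thetaTerm {q z : 𝕜} (hq₀ : q ≠ 0) (hq : ‖q‖ < 1) (hz : z ≠ 0) :
    Summable fun m : ℤ => ‖thetaTerm q z m‖ := by
  refine .of_nat_of_neg (summable_norm_thetaTerm_natCast hq₀ hq hz) ?_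
  simpa only [thetaTerm_neg hq₀] using
    summable_norm_thetaTerm_natCast hq₀ hq (div_ne_zero hq₀ hz)

variable [CompleteSpace 𝕜]

lemma multipliable_one_sub_mul_pow (a : 𝕜) {q : 𝕜} (hq : ‖q‖ < 1) :
    Multipliable fun n : ℕ => 1 - a * q ^ n := by
  simpa only [sub_eq_add_neg] using
    multipliable_one_add_of_summable (summable_norm_neg_mul_pow a hq)

lemma tendsto_qPochhammer (a : 𝕜) {q : 𝕜} (hq : ‖q‖ < 1) :
    Tendsto (qPochhammer a q) atTop (𝓝 (qPochhammerInf a q)) :=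
  (multipliable_one_sub_mul_pow a hq).hasProd.tendsto_prod_nat

lemma qPochhammerInf_ne_zero {a q : 𝕜} (hq : ‖q‖ < 1) (ha : ∀ n : ℕ, a * q ^ n ≠ 1) :
    qPochhammerInf a q ≠ 0 := by
  have hfactor (n : ℕ) : 1 + -(a * q ^ n) ≠ 0 := by
    rw [← sub_eq_add_neg]
    exact sub_ne_zero.mpr (ha n).symm
  simpa only [qPochhammerInf, sub_eq_add_neg] using
    tprod_one_add_ne_zero_of_summable hfactor (summable_norm_neg_mul_pow a hq)

lemma qPochhammerInf_ne_zero_of_norm_lt_one {a q : 𝕜} (ha : ‖a‖ < 1) (hq : ‖q‖ < 1) :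
    qPochhammerInf a q ≠ 0 := by
  refine qPochhammerInf_ne_zero hq fun n h => ?_
  have hlt : ‖a * q ^ n‖ < 1 := by
    rw [norm_mul, norm_pow]
    exact mul_lt_one_of_nonneg_of_lt_one_left (norm_nonneg a) ha
      (pow_le_one₀ (norm_nonneg q) hq.le)
  rw [h, norm_one] at hlt
  exact lt_irrefl _ hlt

lemma qPochhammerInf_eq_prod_range (a : 𝕜) {q : 𝕜} (hq : ‖q‖ < 1) (d : ℕ) [NeZero d] :
    qPochhammerInf a q = ∏ i ∈ Finset.range d, qPochhammerInf (a * q ^ i) (q ^ d) := by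
  have hmul := (Nat.divModEquiv d).symm.multipliable_iff.mpr (multipliable_one_sub_mul_pow a hq)
  calc qPochhammerInf a q
    _ = ∏' p : ℕ × Fin d, (1 - a * q ^ (p.1 * d + p.2)) :=
      ((Nat.divModEquiv d).symm.tprod_eq _).symm
    _ = ∏' n : ℕ, ∏ i : Fin d, (1 - a * q ^ (n * d + i)) := by
      refine (hmul.tprod_prod' fun _ => (hasProd_fintype _).multipliable).trans ?_
      simp only [tprod_fintype, Function.comp_apply, Nat.divModEquiv_symm_apply]
    _ = ∏' n : ℕ, ∏ i ∈ Finset.range d, (1 - a * q ^ i * (q ^ d) ^ n) := by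
      refine tprod_congr fun n => ?_
      rw [Finset.prod_range]
      exact Finset.prod_congr rfl fun i _ => by ring
    _ = ∏ i ∈ Finset.range d, qPochhammerInf (a * q ^ i) (q ^ d) :=
      Multipliable.tprod_finsetProd fun i _ =>
        multipliable_one_sub_mul_pow _ (norm_pow_lt_one hq (NeZero.ne d))

lemma tendsto_recipQPochhammer {q : 𝕜} (hq : ‖q‖ < 1) :
    Tendsto (recipQPochhammer q) atTop (𝓝 (qPochhammerInf q q)⁻¹) := by
  rw [← Nat.map_cast_int_atTop, tendsto_map'_iff]
  simpa only [Function.comp_def, recipQPochhammer_natCast] using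
    (tendsto_qPochhammer q hq).inv₀ (qPochhammerInf_ne_zero_of_norm_lt_one hq hq)

lemma exists_norm_recipQPochhammer_le {q : 𝕜} (hq : ‖q‖ < 1) :
    ∃ C, ∀ n, ‖recipQPochhammer q n‖ ≤ C := by
  obtain ⟨C, hC⟩ := (Metric.isBounded_range_of_tendsto _
    ((tendsto_qPochhammer q hq).inv₀ (qPochhammerInf_ne_zero_of_norm_lt_one hq hq))).exists_norm_le
  have hC' (n : ℕ) : ‖(qPochhammer q q n)⁻¹‖ ≤ C := hC _ ⟨n, rfl⟩
  refine ⟨C, fun n => ?_⟩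
  rcases lt_or_ge n 0 with hn | hn
  · rw [recipQPochhammer_of_neg q hn, norm_zero]
    exact (norm_nonneg _).trans (hC' 0)
  · lift n to ℕ using hn
    rw [recipQPochhammer_natCast]
    exact hC' n

lemma exists_norm_qBinom_le {q : 𝕜} (hq : ‖q‖ < 1) : ∃ C, ∀ n k, ‖qBinom q n k‖ ≤ C := by
  obtain ⟨B, hB⟩ := exists_norm_recipQPochhammer_le hq
  obtain ⟨D, hD⟩ := (Metric.isBounded_range_of_tendsto _ (tendsto_qPochhammer q hq)).exists_norm_le
  have hD' (n : ℕ) : ‖qPochhammer q q n‖ ≤ D := hD _ ⟨n, rfl⟩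
  have hB₀ : 0 ≤ B := (norm_nonneg _).trans (hB 0)
  have hD₀ : 0 ≤ D := (norm_nonneg _).trans (hD' 0)
  refine ⟨D * B * B, fun n k => ?_⟩
  rw [qBinom, norm_mul, norm_mul]
  gcongr
  exacts [hD' n, hB k, hB _]

lemma tendsto_qBinom_centered {q : 𝕜} (hq : ‖q‖ < 1) (m : ℤ) :
    Tendsto (fun N : ℕ => qBinom q (2 * N) (N + m)) atTop (𝓝 (qPochhammerInf q q)⁻¹) := by
  have hnum : Tendsto (fun N : ℕ => qPochhammer q q (2 * N)) atTop (𝓝 (qPochhammerInf q q)) :=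
    (tendsto_qPochhammer q hq).comp (tendsto_id.const_mul_atTop' two_pos)
  have hdenom (j : ℤ) :
      Tendsto (fun N : ℕ => recipQPochhammer q (N + j)) atTop (𝓝 (qPochhammerInf q q)⁻¹) :=
    (tendsto_recipQPochhammer hq).comp
      (tendsto_atTop_add_const_right _ j tendsto_natCast_atTop_atTop)
  have hlim := (hnum.mul (hdenom m)).mul (hdenom (-m))
  rw [mul_inv_cancel₀ (qPochhammerInf_ne_zero_of_norm_lt_one hq hq), one_mul] at hlim
  refine hlim.congr fun N => ?_
  rw [qBinom]
  congr 2
  push_cast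
  ring

/-- **Jacobi's triple product identity**. -/
theorem tsum_thetaTerm {q z : 𝕜} (hq₀ : q ≠ 0) (hq : ‖q‖ < 1) (hz : z ≠ 0) :
    ∑' m, thetaTerm q z m =
      qPochhammerInf q q * (qPochhammerInf z q * qPochhammerInf (q / z) q) := by
  obtain ⟨C, hC⟩ := exists_norm_qBinom_le hq
  have hseries : Tendsto (fun N : ℕ => ∑' m : ℤ, qBinom q (2 * N) (N + m) * thetaTerm q z m)
      atTop (𝓝 (∑' m, (qPochhammerInf q q)⁻¹ * thetaTerm q z m)) := by
    refine tendsto_tsum_of_dominated_convergence (bound := fun m => C * ‖thetaTerm q z m‖)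
      ((summable_norm_thetaTerm hq₀ hq hz).mul_left C)
      (fun m => (tendsto_qBinom_centered hq m).mul_const _) (.of_forall fun N m => ?_)
    rw [norm_mul]
    gcongr
    exact hC _ _
  have hfinite (N : ℕ) := (hasSum_qBinom_centered_mul_thetaTerm hq₀
    (not_isOfFinOrder_of_norm_lt_one hq) hz N).tsum_eq
  simp only [hfinite, tsum_mul_left] at hseries
  have hprod := (tendsto_qPochhammer z hq).mul (tendsto_qPochhammer (q / z) hq)
  rw [tendsto_nhds_unique hprod hseries,
    mul_inv_cancel_left₀ (qPochhammerInf_ne_zero_of_norm_lt_one hq hq)]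

end Infinite

lemma tsum_int_eq_tsum_even_add_neg_odd {E : Type*} [AddCommGroup E] [UniformSpace E]
    [IsUniformAddGroup E] [CompleteSpace E] [T2Space E] {f : ℤ → E} (hf : Summable f) :
    ∑' m, f m = ∑' k, (f (2 * k) + f (-(2 * k + 1))) := by
  have heven : Function.Injective fun k : ℤ => 2 * k := mul_right_injective₀ two_ne_zero
  have hodd : Function.Injective fun k : ℤ => -(2 * k + 1) :=
    neg_injective.comp ((add_left_injective 1).comp heven)
  have hcompl : IsCompl (Set.range fun k : ℤ => 2 * k) (Set.range fun k : ℤ => -(2 * k + 1)) := by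
    convert! Int.isCompl_even_odd using 1
    · ext m
      simp only [Set.mem_range, Set.mem_ofPred_eq, even_iff_exists_two_mul, eq_comm]
    · ext m
      rw [Set.mem_ofPred_eq, ← odd_neg]
      simp only [Set.mem_range, Odd, neg_eq_iff_eq_neg, eq_comm]
  have hsum := HasSum.add_isCompl hcompl
    (heven.hasSum_range_iff.mpr (hf.comp_injective heven).hasSum)
    (hodd.hasSum_range_iff.mpr (hf.comp_injective hodd).hasSum)
  rw [hsum.tsum_eq]
  exact ((hf.comp_injective heven).tsum_add (hf.comp_injective hodd)).symm

section RogersRamanujan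

variable {x : ℂ}

lemma eulerPhi_eq_qPochhammerInf (x : ℂ) : eulerPhi x = qPochhammerInf x x := by
  simp only [eulerPhi, qPochhammerInf, pow_succ']

lemma rrB_eq_inv_qPochhammerInf (hx : ‖x‖ < 1) :
    rrB x = (qPochhammerInf (x ^ 4) (x ^ 5) * qPochhammerInf x (x ^ 5))⁻¹ := by
  have hx4 : ‖x ^ 4‖ < 1 := norm_pow_lt_one hx four_ne_zero
  have hx5 : ‖x ^ 5‖ < 1 := norm_pow_lt_one hx (NeZero.ne 5)
  have hm₄ := multipliable_one_sub_mul_pow (x ^ 4) hx5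
  have hm₁ := multipliable_one_sub_mul_pow x hx5
  have hprod := (hm₄.hasProd.mul hm₁.hasProd).inv₀
    (mul_ne_zero (qPochhammerInf_ne_zero_of_norm_lt_one hx4 hx5)
      (qPochhammerInf_ne_zero_of_norm_lt_one hx hx5))
  rw [← qPochhammerInf, ← qPochhammerInf] at hprod
  rw [← hprod.tprod_eq, rrB]
  refine tprod_congr fun n => ?_
  ring

lemma eulerPhi_mul_rrB (hx : ‖x‖ < 1) :
    eulerPhi x * rrB x = qPochhammerInf (x ^ 5) (x ^ 5) *
      (qPochhammerInf (x ^ 3) (x ^ 5) * qPochhammerInf (x ^ 2) (x ^ 5)) := by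
  have hx4 : ‖x ^ 4‖ < 1 := norm_pow_lt_one hx four_ne_zero
  have hx5 : ‖x ^ 5‖ < 1 := norm_pow_lt_one hx (NeZero.ne 5)
  have h₁ := qPochhammerInf_ne_zero_of_norm_lt_one hx hx5
  have h₄ := qPochhammerInf_ne_zero_of_norm_lt_one hx4 hx5
  rw [eulerPhi_eq_qPochhammerInf, qPochhammerInf_eq_prod_range x hx 5,
    rrB_eq_inv_qPochhammerInf hx]
  simp only [Finset.prod_range_succ, Finset.prod_range_zero, one_mul, ← pow_succ', Nat.reduceAdd]
  field_simp

lemma thetaTerm_pow_five_pow_three (hx₀ : x ≠ 0) (m : ℤ) :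
    thetaTerm (x ^ 5) (x ^ 3) m = (-1) ^ m * x ^ (3 * m + 5 * (m * (m - 1) / 2)) := by
  rw [thetaTerm, neg_eq_neg_one_mul, mul_zpow, zpow_add₀ hx₀, zpow_mul, zpow_mul, mul_assoc]
  norm_cast

lemma thetaTerm_pow_five_pow_three_even (hx₀ : x ≠ 0) (k : ℤ) :
    thetaTerm (x ^ 5) (x ^ 3) (2 * k) = x ^ (10 * k ^ 2 + k) := by
  have hexp : 3 * (2 * k) + 5 * (2 * k * (2 * k - 1) / 2) = 10 * k ^ 2 + k := by
    linarith [two_mul_mul_pred_ediv_two (2 * k)]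
  rw [thetaTerm_pow_five_pow_three hx₀, hexp, (even_two_mul k).neg_one_zpow, one_mul]

lemma thetaTerm_pow_five_pow_three_odd (hx₀ : x ≠ 0) (k : ℤ) :
    thetaTerm (x ^ 5) (x ^ 3) (-(2 * k + 1)) = -x ^ (10 * k ^ 2 + 9 * k + 2) := by
  have hexp : 3 * -(2 * k + 1) + 5 * (-(2 * k + 1) * (-(2 * k + 1) - 1) / 2) =
      10 * k ^ 2 + 9 * k + 2 := by
    linarith [two_mul_mul_pred_ediv_two (-(2 * k + 1))]
  rw [thetaTerm_pow_five_pow_three hx₀, hexp, (odd_two_mul_add_one k).neg.neg_one_zpow,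
    neg_one_mul]

lemma tsum_zpow_sub_zpow_eq_eulerPhi_mul_rrB (hx₀ : x ≠ 0) (hx : ‖x‖ < 1) :
    ∑' k : ℤ, (x ^ (10 * k ^ 2 + k) - x ^ (10 * k ^ 2 + 9 * k + 2)) = eulerPhi x * rrB x := by
  have hx5 : ‖x ^ 5‖ < 1 := norm_pow_lt_one hx (NeZero.ne 5)
  have hdiv : x ^ 5 / x ^ 3 = x ^ 2 := by field_simp
  rw [eulerPhi_mul_rrB hx, ← hdiv,
    ← tsum_thetaTerm (pow_ne_zero 5 hx₀) hx5 (pow_ne_zero 3 hx₀),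
    tsum_int_eq_tsum_even_add_neg_odd
      (summable_norm_thetaTerm (pow_ne_zero 5 hx₀) hx5 (pow_ne_zero 3 hx₀)).of_norm]
  refine tsum_congr fun k => ?_
  rw [thetaTerm_pow_five_pow_three_even hx₀, thetaTerm_pow_five_pow_three_odd hx₀, sub_eq_add_neg]

end RogersRamanujan

theorem virasoro_char_23_eq_phi_b (q : ℂ) (hq : ‖q‖ < 1) :
    ∑' k : ℤ, q ^ (30 * k ^ 2) * (q ^ (3 * k) - q ^ (27 * k + 6)) =
      eulerPhi (q ^ 3) * rrB (q ^ 3) := by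
  rcases eq_or_ne q 0 with rfl | hq₀
  · rw [tsum_eq_single 0 fun k hk => by rw [zero_zpow _ (by positivity), zero_mul]]
    simp [eulerPhi, rrB]
  · have hq3 : ‖q ^ 3‖ < 1 := norm_pow_lt_one hq three_ne_zero
    rw [← tsum_zpow_sub_zpow_eq_eulerPhi_mul_rrB (pow_ne_zero 3 hq₀) hq3]
    refine tsum_congr fun k => ?_
    rw [mul_sub, ← zpow_add₀ hq₀, ← zpow_add₀ hq₀, ← zpow_natCast q 3, ← zpow_mul, ← zpow_mul]
    congr 2 <;> push_cast <;> ring
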